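/- Let V be a 5-dimensional complex vector space and Q a quadratic form on V whose rank is 3 or 4. Let L ⊆ V be a 2-dimensional totally isotropic subspace with L ⊄ rad(Q). Then there are at most two 3-dimensional totally isotropic subspaces of Q containing L. -/

import Mathlib

/-!
If three distinct isotropic `W₁, W₂, W₃` of dimension 3 contained `L`, they would pairwise meet
in `L` and all lie in the hyperplane `l^⊥` for some `l ∈ L` outside the radical, so that
`W₁ + W₂ = l^⊥` contains `W₃`. Write `w ∈ W₃ \ L` as `u + v` with `u ∈ W₁`, `v ∈ W₂`; then
`u, v ∉ L` and `0 = Q w = B(u, v)`. Since `W₁ = L + ⟨u⟩` and `W₂ = L + ⟨v⟩`, this makes `W₁ + W₂`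
a 4-dimensional subspace on which `B` vanishes identically, which forces `rank B ≤ 2`.
-/

open Module

namespace IsotropicPlanes

variable {V : Type*} [AddCommGroup V] [Module ℂ V]

lemma polar_eq_zero_of_isotropic {Q : QuadraticForm ℂ V} {W : Submodule ℂ V}
    (hW : ∀ x ∈ W, Q x = 0) {x y : V} (hx : x ∈ W) (hy : y ∈ W) : Q.polarBilin x y = 0 := by
  simp [QuadraticMap.polar, hW _ hx, hW _ hy, hW _ (W.add_mem hx hy)]

variable [FiniteDimensional ℂ V]

lemma inf_eq_of_ne {L W W' : Submodule ℂ V} (hL : finrank ℂ L = 2) (hW : finrank ℂ W = 3)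
    (hW' : finrank ℂ W' = 3) (hLW : L ≤ W) (hLW' : L ≤ W') (hne : W ≠ W') : W ⊓ W' = L := by
  refine (Submodule.eq_of_le_of_finrank_le (le_inf hLW hLW') ?_).symm
  by_contra! hlt
  have h1 : W ⊓ W' = W := Submodule.eq_of_le_of_finrank_le inf_le_left (by omega)
  have h2 : W ⊓ W' = W' := Submodule.eq_of_le_of_finrank_le inf_le_right (by omega)
  exact hne (h1.symm.trans h2)

lemma sup_span_eq {L W : Submodule ℂ V} (hL : finrank ℂ L = 2) (hW : finrank ℂ W = 3)
    (hLW : L ≤ W) {u : V} (hu : u ∈ W) (huL : u ∉ L) : L ⊔ Submodule.span ℂ {u} = W := by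
  refine Submodule.eq_of_le_of_finrank_le (sup_le hLW (by simpa using hu)) ?_
  have hlt : L < L ⊔ Submodule.span ℂ {u} :=
    lt_of_le_of_ne le_sup_left fun h => huL (by
      rw [h]; exact Submodule.mem_sup_right (Submodule.mem_span_singleton_self u))
  have := Submodule.finrank_lt_finrank_of_lt hlt
  omega

/-- `B` maps `U` into the annihilator of `U`, so `dim U ≤ dim rad B + codim U`. -/
lemma two_mul_finrank_le (B : V →ₗ[ℂ] V →ₗ[ℂ] ℂ) (U : Submodule ℂ V)
    (hU : ∀ x ∈ U, ∀ y ∈ U, B x y = 0) :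
    2 * finrank ℂ U ≤ finrank ℂ V + finrank ℂ (LinearMap.ker B) := by
  have h1 := (B.domRestrict U).finrank_range_add_finrank_ker
  have h2 : LinearMap.range (B.domRestrict U) ≤ U.dualAnnihilator := by
    rintro _ ⟨x, rfl⟩
    exact (Submodule.mem_dualAnnihilator _).2 fun y hy => hU x x.2 y hy
  have h3 := Submodule.finrank_mono h2
  have h4 : finrank ℂ U + finrank ℂ U.dualAnnihilator = finrank ℂ V :=
    Subspace.finrank_add_finrank_dualAnnihilator_eq U
  -- The two occurrences of `finrank U.dualAnnihilator` agree only up to unfolding `Dual`.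
  have h34 := (Nat.add_le_add_left h3 (finrank ℂ U)).trans_eq h4
  have h5 : (LinearMap.ker (B.domRestrict U)).map U.subtype ≤ LinearMap.ker B := by
    rintro _ ⟨x, hx, rfl⟩
    exact hx
  have h6 := Submodule.finrank_mono h5
  rw [Submodule.finrank_map_subtype_eq] at h6
  omega

end IsotropicPlanes

open IsotropicPlanes in
/-- For a quadratic form of rank 3 or 4 on a 5-dimensional complex vector space and a
2-dimensional totally isotropic subspace `L` not contained in the radical, there are at
most two 3-dimensional totally isotropic subspaces containing `L`. -/
theorem at_most_two_totallyIsotropic_planes_through_line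
    (V : Type*) [AddCommGroup V] [Module ℂ V] [FiniteDimensional ℂ V]
    (hV : Module.finrank ℂ V = 5) (Q : QuadraticForm ℂ V)
    (hrk : Module.finrank ℂ V - Module.finrank ℂ ↥(LinearMap.ker Q.polarBilin) = 3 ∨
           Module.finrank ℂ V - Module.finrank ℂ ↥(LinearMap.ker Q.polarBilin) = 4)
    (L : Submodule ℂ V) (hL : Module.finrank ℂ ↥L = 2) (hLiso : ∀ x ∈ L, Q x = 0)
    (hLrad : ¬ L ≤ LinearMap.ker Q.polarBilin) :
    ∃ W₁ W₂ : Submodule ℂ V, ∀ W : Submodule ℂ V,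
      Module.finrank ℂ ↥W = 3 → (∀ x ∈ W, Q x = 0) → L ≤ W → W = W₁ ∨ W = W₂ := by
  by_contra! hcon
  obtain ⟨W₁, d₁, i₁, l₁, -, -⟩ := hcon ⊥ ⊥
  obtain ⟨W₂, d₂, i₂, l₂, n₁₂, -⟩ := hcon W₁ W₁
  obtain ⟨W₃, d₃, i₃, l₃, n₁₃, n₂₃⟩ := hcon W₁ W₂
  have e₁₂ := inf_eq_of_ne hL d₁ d₂ l₁ l₂ n₁₂.symm
  have e₁₃ := inf_eq_of_ne hL d₁ d₃ l₁ l₃ n₁₃.symm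
  have e₂₃ := inf_eq_of_ne hL d₂ d₃ l₂ l₃ n₂₃.symm
  obtain ⟨l, hl, hlrad⟩ := Set.not_subset.1 hLrad
  have hK : ∀ W : Submodule ℂ V, (∀ x ∈ W, Q x = 0) → L ≤ W →
      W ≤ LinearMap.ker (Q.polarBilin l) :=
    fun W hW hLW x hx => polar_eq_zero_of_isotropic hW (hLW hl) hx
  have hKlt : finrank ℂ (LinearMap.ker (Q.polarBilin l)) < finrank ℂ V :=
    Submodule.finrank_lt fun h => hlrad (LinearMap.ker_eq_top.1 h)
  have hdim := Submodule.finrank_sup_add_finrank_inf_eq W₁ W₂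
  rw [e₁₂] at hdim
  have hsup : W₁ ⊔ W₂ = LinearMap.ker (Q.polarBilin l) :=
    Submodule.eq_of_le_of_finrank_le (sup_le (hK _ i₁ l₁) (hK _ i₂ l₂)) (by omega)
  obtain ⟨w, hw, hwL⟩ : ∃ w ∈ W₃, w ∉ L := by
    by_contra! h
    have := Submodule.finrank_mono (show W₃ ≤ L from h)
    omega
  obtain ⟨u, hu, v, hv, rfl⟩ := Submodule.mem_sup.1 (hsup ▸ hK _ i₃ l₃ hw)
  have huL : u ∉ L := fun h => hwL (e₂₃ ▸ ⟨W₂.add_mem (l₂ h) hv, hw⟩)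
  have hvL : v ∉ L := fun h => hwL (e₁₃ ▸ ⟨W₁.add_mem hu (l₁ h), hw⟩)
  have huv : Q.polarBilin u v = 0 := by
    simp [QuadraticMap.polar, i₃ _ hw, i₁ _ hu, i₂ _ hv]
  have h₁₂ : ∀ x ∈ W₁, ∀ y ∈ W₂, Q.polarBilin x y = 0 := by
    intro x hx y hy
    rw [← sup_span_eq hL d₁ l₁ hu huL] at hx
    obtain ⟨a, ha, b, hb, rfl⟩ := Submodule.mem_sup.1 hx
    obtain ⟨s, rfl⟩ := Submodule.mem_span_singleton.1 hb
    have hay := polar_eq_zero_of_isotropic i₂ (l₂ ha) hy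
    rw [← sup_span_eq hL d₂ l₂ hv hvL] at hy
    obtain ⟨c, hc, d, hd, rfl⟩ := Submodule.mem_sup.1 hy
    obtain ⟨t, rfl⟩ := Submodule.mem_span_singleton.1 hd
    have huc := polar_eq_zero_of_isotropic i₁ hu (l₁ hc)
    rw [LinearMap.map_add₂, hay, LinearMap.map_smul₂, map_add, map_smul, huc, huv]
    simp
  have hU : ∀ x ∈ W₁ ⊔ W₂, ∀ y ∈ W₁ ⊔ W₂, Q.polarBilin x y = 0 := by
    intro x hx y hy
    obtain ⟨a, ha, b, hb, rfl⟩ := Submodule.mem_sup.1 hx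
    obtain ⟨c, hc, d, hd, rfl⟩ := Submodule.mem_sup.1 hy
    have hbc : Q.polarBilin b c = 0 := by
      have := h₁₂ c hc b hb
      rwa [QuadraticMap.polarBilin_apply_apply, QuadraticMap.polar_comm] at this
    rw [LinearMap.map_add₂, map_add, map_add, h₁₂ a ha d hd, hbc,
      polar_eq_zero_of_isotropic i₁ ha hc, polar_eq_zero_of_isotropic i₂ hb hd]
    simp
  have := two_mul_finrank_le Q.polarBilin _ hU
  omega
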